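/- Suppose E_k is one-dimensional. Then every (a, b) ∈ Q_k with ν(a) < b < μ(a) satisfies (a, b) ∉ Σ; that is, the open region between the minimal curve b = ν(a) and the maximal curve b = μ(a) contains no point of the Dancer–Fučík spectrum. -/

import Mathlib

open MeasureTheory RealInnerProductSpace

/-!
A solution `u` of the Fučík equation is a critical point of the energy `J` at level `0`, and since
`J` is concave along `N` and convex along `M`, it satisfies `J ≤ 0` on `u + N` and `0 ≤ J` on
`u + M`. Let `y` be the `E`-component of `u`. If `n(a, b) < 0`, then some slice `y₁ + w + N` with
`y₁ ∈ E`, `w ∈ M` carries only negative values of `J`; if `0 < m(a, b)`, then some slice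
`y₂ + v + M` with `v ∈ N` carries only positive ones. When `E` is a line, homogeneity moves `y₁` and
`y₂` to `y`, `0` or `-y`. The positions `y` and `0` are excluded by the signs of `J` on `u + N`,
`u + M`, `N` and `M`; hence both slices sit over `-y`, where they meet: a contradiction.
-/

section Slices

variable {V : Type*} [AddCommGroup V] [Module ℝ V] {J : V → ℝ} {N E M : Submodule ℝ V}

/-- Some translate of `N` through `y + M` carries only negative values of `J`. Applied to `-J` with
`N` and `M` exchanged, it says that some translate of `M` through `y + N` carries only positive
values of `J`. -/
def HasNegSlice (J : V → ℝ) (N M : Submodule ℝ V) (y : V) : Prop :=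
  ∃ w ∈ M, ∀ v ∈ N, J (y + w + v) < 0

theorem HasNegSlice.not_neg_swap {y : V} (h : HasNegSlice J N M y) : ¬ HasNegSlice (-J) M N y := by
  rintro ⟨v, hv, hpos⟩
  obtain ⟨w, hw, hneg⟩ := h
  have hposw : 0 < J (y + w + v) := by
    simpa only [Pi.neg_apply, neg_lt_zero, add_right_comm y v w] using hpos w hw
  exact lt_asymm hposw (hneg v hv)

theorem not_hasNegSlice_of_nonneg {y v w : V} (hv : v ∈ N) (hw : w ∈ M)
    (h : ∀ z ∈ M, 0 ≤ J (v + y + w + z)) : ¬ HasNegSlice J N M y := by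
  rintro ⟨w', hw', hneg⟩
  refine (hneg v hv).not_ge ?_
  simpa only [show v + y + w + (w' - w) = y + w' + v by abel] using h _ (M.sub_mem hw' hw)

theorem HasNegSlice.smul (hJ : ∀ c : ℝ, 0 < c → ∀ u, J (c • u) = c ^ 2 * J u) {y : V}
    (h : HasNegSlice J N M y) {c : ℝ} (hc : 0 < c) : HasNegSlice J N M (c • y) := by
  obtain ⟨w, hw, hneg⟩ := h
  refine ⟨c • w, M.smul_mem c hw, fun v hv => ?_⟩
  have hscale : J (c • y + c • w + v) = c ^ 2 * J (y + w + c⁻¹ • v) := by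
    rw [← hJ c hc, smul_add, smul_add, smul_inv_smul₀ hc.ne']
  rw [hscale]
  exact mul_neg_of_pos_of_neg (pow_pos hc 2) (hneg _ (N.smul_mem _ hv))

theorem HasNegSlice.neg_of_smul (hJ : ∀ c : ℝ, 0 < c → ∀ u, J (c • u) = c ^ 2 * J u) {y : V}
    {s : ℝ} (h : HasNegSlice J N M (s • y)) (h_zero : ¬ HasNegSlice J N M 0)
    (h_self : ¬ HasNegSlice J N M y) : HasNegSlice J N M (-y) := by
  rcases lt_trichotomy s 0 with hs | rfl | hs
  · have hrescaled := h.smul hJ (inv_pos.2 (neg_pos.2 hs))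
    rwa [inv_neg, neg_smul, inv_smul_smul₀ hs.ne] at hrescaled
  · exact absurd (zero_smul ℝ y ▸ h) h_zero
  · have hrescaled := h.smul hJ (inv_pos.2 hs)
    exact absurd (inv_smul_smul₀ hs.ne' y ▸ hrescaled) h_self

theorem eq_zero_of_mem_sup_of_saddle (hN : ∀ v ∈ N, v ≠ 0 → J v < 0)
    (hM : ∀ w ∈ M, w ≠ 0 → 0 < J w) {u : V} (hu : u ∈ N ⊔ M) (huN : ∀ v ∈ N, J (u + v) ≤ 0)
    (huM : ∀ w ∈ M, 0 ≤ J (u + w)) : u = 0 := by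
  obtain ⟨v, hv, w, hw, rfl⟩ := Submodule.mem_sup.1 hu
  have hJv : 0 ≤ J v := by simpa using huM (-w) (M.neg_mem hw)
  have hJw : J w ≤ 0 := by simpa using huN (-v) (N.neg_mem hv)
  have hv0 : v = 0 := by_contra fun h => (hN v hv h).not_ge hJv
  have hw0 : w = 0 := by_contra fun h => (hM w hw h).not_ge hJw
  rw [hv0, hw0, add_zero]

theorem eq_zero_of_saddle_of_hasNegSlice (hJ : ∀ c : ℝ, 0 < c → ∀ u, J (c • u) = c ^ 2 * J u)
    (hN : ∀ v ∈ N, v ≠ 0 → J v < 0) (hM : ∀ w ∈ M, w ≠ 0 → 0 < J w)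
    (hE : Module.finrank ℝ E = 1) {u : V} (hu : u ∈ N ⊔ E ⊔ M) (huN : ∀ v ∈ N, J (u + v) ≤ 0)
    (huM : ∀ w ∈ M, 0 ≤ J (u + w)) (hneg : ∃ y ∈ E, HasNegSlice J N M y)
    (hpos : ∃ y ∈ E, HasNegSlice (-J) M N y) : u = 0 := by
  obtain ⟨p, hp, w, hw, rfl⟩ := Submodule.mem_sup.1 hu
  obtain ⟨v, hv, y, hy, rfl⟩ := Submodule.mem_sup.1 hp
  obtain ⟨y₁, hy₁, hneg⟩ := hneg
  obtain ⟨y₂, hy₂, hpos⟩ := hpos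
  by_contra hu0
  have hy0 : y ≠ 0 := by
    rintro rfl
    refine hu0 (eq_zero_of_mem_sup_of_saddle hN hM (Submodule.add_mem_sup ?_ hw) huN huM)
    rwa [add_zero]
  have hspan : ∀ z ∈ E, ∃ s : ℝ, s • y = z := fun z hz => by
    obtain ⟨s, hs⟩ := exists_smul_eq_of_finrank_eq_one hE (x := ⟨y, hy⟩)
      (fun h => hy0 (congrArg Subtype.val h)) ⟨z, hz⟩
    exact ⟨s, congrArg Subtype.val hs⟩
  obtain ⟨s₁, rfl⟩ := hspan y₁ hy₁
  obtain ⟨s₂, rfl⟩ := hspan y₂ hy₂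
  have hJ0 : J 0 = 0 := by
    have h := hJ 2 two_pos 0
    rw [smul_zero] at h
    linarith
  have hN0 : ∀ v ∈ N, J v ≤ 0 := fun v hv => by
    rcases eq_or_ne v 0 with rfl | h
    exacts [hJ0.le, (hN v hv h).le]
  have hM0 : ∀ w ∈ M, 0 ≤ J w := fun w hw => by
    rcases eq_or_ne w 0 with rfl | h
    exacts [hJ0.ge, (hM w hw h).le]
  have hnegSlice : HasNegSlice J N M (-y) := hneg.neg_of_smul hJ
    (not_hasNegSlice_of_nonneg N.zero_mem M.zero_mem (by simpa using hM0))
    (not_hasNegSlice_of_nonneg hv hw huM)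
  have hposSlice : HasNegSlice (-J) M N (-y) := hpos.neg_of_smul
    (fun c hc z => by simp only [Pi.neg_apply, hJ c hc, mul_neg])
    (not_hasNegSlice_of_nonneg M.zero_mem N.zero_mem (by simpa using hN0))
    (not_hasNegSlice_of_nonneg hw hv fun z hz => by
      simpa only [Pi.neg_apply, neg_nonneg, show w + y + v = v + y + w by abel] using huN z hz)
  exact hnegSlice.not_neg_swap hposSlice

end Slices

section Minimax

variable {V : Type*} [SeminormedAddCommGroup V] [Module ℝ V] {J : V → ℝ} {N E M : Submodule ℝ V}

/-- The minimax level `inf_{w ∈ W, ‖w‖ = 1} sup_{v ∈ N} J (v + w)`, which is `n(a, b)` for the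
Fučík energy. Real `sInf` and `sSup` are used, so an infinite level reads as `0`. -/
noncomputable def infSup (J : V → ℝ) (N W : Submodule ℝ V) : ℝ :=
  sInf {t : ℝ | ∃ w ∈ W, ‖w‖ = 1 ∧ t = sSup {r : ℝ | ∃ v ∈ N, r = J (v + w)}}

/-- The maximin level `sup_{v ∈ W, ‖v‖ = 1} inf_{w ∈ M} J (v + w)`, which is `m(a, b)` for the
Fučík energy, with the same convention on infinite levels as `infSup`. -/
noncomputable def supInf (J : V → ℝ) (W M : Submodule ℝ V) : ℝ :=
  sSup {t : ℝ | ∃ v ∈ W, ‖v‖ = 1 ∧ t = sInf {r : ℝ | ∃ w ∈ M, r = J (v + w)}}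

theorem exists_hasNegSlice_of_infSup_neg (h : infSup J N (E ⊔ M) < 0) :
    ∃ y ∈ E, HasNegSlice J N M y := by
  contrapose! h
  refine Real.sInf_nonneg ?_
  rintro t ⟨z, hz, -, rfl⟩
  obtain ⟨y, hy, w, hw, rfl⟩ := Submodule.mem_sup.1 hz
  have hslice := h y hy
  simp only [HasNegSlice, not_exists, not_and, not_forall, not_lt] at hslice
  obtain ⟨v, hv, hJ⟩ := hslice w hw
  exact Real.sSup_nonneg' ⟨_, ⟨v, hv, rfl⟩, by rwa [add_comm v]⟩

theorem exists_hasNegSlice_of_supInf_pos (h : 0 < supInf J (N ⊔ E) M) :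
    ∃ y ∈ E, HasNegSlice (-J) M N y := by
  contrapose! h
  refine Real.sSup_nonpos ?_
  rintro t ⟨z, hz, -, rfl⟩
  obtain ⟨v, hv, y, hy, rfl⟩ := Submodule.mem_sup.1 hz
  have hslice := h y hy
  simp only [HasNegSlice, Pi.neg_apply, neg_lt_zero, not_exists, not_and, not_forall, not_lt]
    at hslice
  obtain ⟨w, hw, hJ⟩ := hslice v hv
  exact Real.sInf_nonpos' ⟨_, ⟨w, hw, rfl⟩, by rwa [add_comm v]⟩

end Minimax

section FucikForm

theorem max_zero_mul_self_eq_sq (s : ℝ) : max s 0 * s = max s 0 ^ 2 := by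
  rcases le_total s 0 with hs | hs <;> simp [hs, sq]

theorem sq_max_zero_add_two_mul_le (s t : ℝ) :
    max s 0 ^ 2 + 2 * (max s 0 * t) ≤ max (s + t) 0 ^ 2 := by
  have hmono : max s 0 * (s + t) ≤ max s 0 * max (s + t) 0 :=
    mul_le_mul_of_nonneg_left (le_max_left _ _) (le_max_right _ _)
  linear_combination 2 * hmono + sq_nonneg (max s 0 - max (s + t) 0)
    - 2 * max_zero_mul_self_eq_sq s

theorem sq_max_zero_add_sq_max_neg_zero (s : ℝ) : max s 0 ^ 2 + max (-s) 0 ^ 2 = s ^ 2 := by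
  rcases le_total s 0 with hs | hs <;> simp [hs]

-- Subtracting `c s²` leaves `(b - c) (s⁺)² + (a - c) (s⁻)²`, which is convex.
theorem fucik_pointwise_convexity {a b c : ℝ} (ha : c ≤ a) (hb : c ≤ b) (s t : ℝ) :
    b * max s 0 ^ 2 + a * max (-s) 0 ^ 2 + 2 * ((b * max s 0 - a * max (-s) 0) * t) + c * t ^ 2 ≤
      b * max (s + t) 0 ^ 2 + a * max (-(s + t)) 0 ^ 2 := by
  have hpos := mul_le_mul_of_nonneg_left (sq_max_zero_add_two_mul_le s t) (sub_nonneg.2 hb)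
  have hneg := mul_le_mul_of_nonneg_left (sq_max_zero_add_two_mul_le (-s) (-t)) (sub_nonneg.2 ha)
  rw [← neg_add] at hneg
  linear_combination hpos + hneg + c * sq_max_zero_add_sq_max_neg_zero s
    - c * sq_max_zero_add_sq_max_neg_zero (s + t)
    + 2 * c * t * max_zero_sub_max_neg_zero_eq_self s

variable {Ω : Type*} [MeasurableSpace Ω] {μ : Measure Ω}

/-- The form `∫ b (f⁺)² + a (f⁻)²` on `L²`. -/
noncomputable def fucikForm (a b : ℝ) (f : Lp ℝ 2 μ) : ℝ :=
  ∫ x, (b * Lp.posPart f x ^ 2 + a * Lp.negPart f x ^ 2) ∂μ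

/-- Half of the derivative of `fucikForm a b` at `f` in the direction `h`. -/
noncomputable def fucikHalfDeriv (a b : ℝ) (f h : Lp ℝ 2 μ) : ℝ :=
  ∫ x, (b * Lp.posPart f x - a * Lp.negPart f x) * h x ∂μ

theorem integrable_fucikForm (a b : ℝ) (f : Lp ℝ 2 μ) :
    Integrable (fun x => b * Lp.posPart f x ^ 2 + a * Lp.negPart f x ^ 2) μ :=
  ((Lp.memLp _).integrable_sq.const_mul b).add ((Lp.memLp _).integrable_sq.const_mul a)

theorem integrable_fucikHalfDeriv (a b : ℝ) (f h : Lp ℝ 2 μ) :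
    Integrable (fun x => (b * Lp.posPart f x - a * Lp.negPart f x) * h x) μ :=
  (((Lp.memLp _).const_mul b).sub ((Lp.memLp _).const_mul a)).integrable_mul (Lp.memLp h)

theorem fucikForm_neg_neg (a b : ℝ) (f : Lp ℝ 2 μ) : fucikForm (-a) (-b) f = -fucikForm a b f := by
  simp only [fucikForm, neg_mul, ← neg_add, integral_neg]

theorem fucikHalfDeriv_neg_neg (a b : ℝ) (f h : Lp ℝ 2 μ) :
    fucikHalfDeriv (-a) (-b) f h = -fucikHalfDeriv a b f h := by
  simp only [fucikHalfDeriv, neg_mul, ← neg_sub', integral_neg]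

theorem fucikHalfDeriv_zero_left (a b : ℝ) (h : Lp ℝ 2 μ) : fucikHalfDeriv a b 0 h = 0 := by
  refine integral_eq_zero_of_ae ?_
  filter_upwards [Lp.coeFn_posPart (0 : Lp ℝ 2 μ), Lp.coeFn_negPart_eq_max (0 : Lp ℝ 2 μ),
    Lp.coeFn_zero ℝ 2 μ] with x hpos hneg hzero
  simp only [hpos, hneg, hzero, Pi.zero_apply, neg_zero, max_self, mul_zero, sub_zero, zero_mul]

theorem fucikHalfDeriv_self (a b : ℝ) (f : Lp ℝ 2 μ) :
    fucikHalfDeriv a b f f = fucikForm a b f := by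
  refine integral_congr_ae ?_
  filter_upwards [Lp.coeFn_posPart f, Lp.coeFn_negPart_eq_max f] with x hpos hneg
  simp only [hpos, hneg]
  linear_combination b * max_zero_mul_self_eq_sq (f x) + a * max_zero_mul_self_eq_sq (-f x)

theorem fucikForm_smul (a b : ℝ) {c : ℝ} (hc : 0 ≤ c) (f : Lp ℝ 2 μ) :
    fucikForm a b (c • f) = c ^ 2 * fucikForm a b f := by
  rw [fucikForm, fucikForm, ← integral_const_mul]
  refine integral_congr_ae ?_
  filter_upwards [Lp.coeFn_posPart f, Lp.coeFn_negPart_eq_max f, Lp.coeFn_posPart (c • f),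
    Lp.coeFn_negPart_eq_max (c • f), Lp.coeFn_smul c f] with x hpos hneg hpos' hneg' hsmul
  have hmax : ∀ s : ℝ, max (c * s) 0 = c * max s 0 := fun s => by
    rw [mul_max_of_nonneg _ _ hc, mul_zero]
  simp only [hpos, hneg, hpos', hneg', hsmul, Pi.smul_apply, smul_eq_mul, ← mul_neg, hmax]
  ring

theorem Lp_two_norm_sq_eq_integral (f : Lp ℝ 2 μ) : ‖f‖ ^ 2 = ∫ x, f x ^ 2 ∂μ := by
  rw [← real_inner_self_eq_norm_sq, L2.inner_def]
  simp only [real_inner_self_eq_norm_sq, Real.norm_eq_abs, sq_abs]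

theorem le_fucikForm_add {a b c : ℝ} (ha : c ≤ a) (hb : c ≤ b) (f h : Lp ℝ 2 μ) :
    fucikForm a b f + 2 * fucikHalfDeriv a b f h + c * ‖h‖ ^ 2 ≤ fucikForm a b (f + h) := by
  have hform := integrable_fucikForm a b f
  have hderiv := (integrable_fucikHalfDeriv a b f h).const_mul 2
  have hsq := (Lp.memLp h).integrable_sq.const_mul c
  rw [Lp_two_norm_sq_eq_integral, fucikForm, fucikHalfDeriv, ← integral_const_mul,
    ← integral_const_mul, ← integral_add hform hderiv]
  refine (integral_add (hform.add hderiv) hsq).symm.trans_le ?_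
  refine integral_mono_ae ((hform.add hderiv).add hsq) (integrable_fucikForm a b (f + h)) ?_
  filter_upwards [Lp.coeFn_posPart f, Lp.coeFn_negPart_eq_max f, Lp.coeFn_posPart (f + h),
    Lp.coeFn_negPart_eq_max (f + h), Lp.coeFn_add f h] with x hpos hneg hpos' hneg' hadd
  simp only [Pi.add_apply, hpos, hneg, hpos', hneg', hadd]
  exact fucik_pointwise_convexity ha hb (f x) (h x)

theorem fucikForm_add_le {a b c : ℝ} (ha : a ≤ c) (hb : b ≤ c) (f h : Lp ℝ 2 μ) :
    fucikForm a b (f + h) ≤ fucikForm a b f + 2 * fucikHalfDeriv a b f h + c * ‖h‖ ^ 2 := by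
  have hlower := le_fucikForm_add (neg_le_neg ha) (neg_le_neg hb) f h
  rw [fucikForm_neg_neg, fucikForm_neg_neg, fucikHalfDeriv_neg_neg] at hlower
  linarith

end FucikForm

section FucikEnergy

variable {Ω : Type*} [MeasurableSpace Ω] {μ : Measure Ω}
  {H : Type*} [NormedAddCommGroup H] [InnerProductSpace ℝ H] {ι : H →ₗ[ℝ] Lp ℝ 2 μ}
  {a b c : ℝ} {u h : H}

/-- The functional `I(·, a, b)`; the map `ι` plays the role of the inclusion of `H` into `L²`. -/
noncomputable def fucikEnergy (ι : H →ₗ[ℝ] Lp ℝ 2 μ) (a b : ℝ) (u : H) : ℝ :=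
  ‖u‖ ^ 2 / 2 - fucikForm a b (ι u) / 2

/-- The weak form of the Fučík equation `u = b u⁺ - a u⁻`; the solution `u = 0` is allowed. -/
def IsFucikSolution (ι : H →ₗ[ℝ] Lp ℝ 2 μ) (a b : ℝ) (u : H) : Prop :=
  ∀ v : H, ⟪u, v⟫ = fucikHalfDeriv a b (ι u) (ι v)

/-- The Dancer–Fučík spectrum `Σ`. -/
def fucikSpectrum (ι : H →ₗ[ℝ] Lp ℝ 2 μ) : Set (ℝ × ℝ) :=
  {q | ∃ u : H, u ≠ 0 ∧ IsFucikSolution ι q.1 q.2 u}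

/-- The curve `b = ν(a)`, for `W` in the role of `M_{k-1}`. A real `sSup` is used, so the value is
`0` when no `b` qualifies. -/
noncomputable def minimalCurve (ι : H →ₗ[ℝ] Lp ℝ 2 μ) (N W : Submodule ℝ H) (lam₀ lam₂ a : ℝ) : ℝ :=
  sSup {b ∈ Set.Ioo lam₀ lam₂ | 0 ≤ infSup (fucikEnergy ι a b) N W}

/-- The curve `b = μ(a)`, for `W` in the role of `N_k`. A real `sInf` is used, so the value is `0`
when no `b` qualifies. -/
noncomputable def maximalCurve (ι : H →ₗ[ℝ] Lp ℝ 2 μ) (W M : Submodule ℝ H) (lam₀ lam₂ a : ℝ) : ℝ :=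
  sInf {b ∈ Set.Ioo lam₀ lam₂ | supInf (fucikEnergy ι a b) W M ≤ 0}

theorem infSup_fucikEnergy_neg_of_minimalCurve_lt {N W : Submodule ℝ H} {lam₀ lam₂ : ℝ}
    (hb : b ∈ Set.Ioo lam₀ lam₂) (hν : minimalCurve ι N W lam₀ lam₂ a < b) :
    infSup (fucikEnergy ι a b) N W < 0 := by
  contrapose! hν
  exact le_csSup ⟨lam₂, fun _ hx => hx.1.2.le⟩ ⟨hb, hν⟩

theorem supInf_fucikEnergy_pos_of_lt_maximalCurve {W M : Submodule ℝ H} {lam₀ lam₂ : ℝ}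
    (hb : b ∈ Set.Ioo lam₀ lam₂) (hμ : b < maximalCurve ι W M lam₀ lam₂ a) :
    0 < supInf (fucikEnergy ι a b) W M := by
  contrapose! hμ
  exact csInf_le ⟨lam₀, fun _ hx => hx.1.1.le⟩ ⟨hb, hμ⟩

theorem fucikEnergy_smul (a b : ℝ) (hc : 0 ≤ c) (u : H) :
    fucikEnergy ι a b (c • u) = c ^ 2 * fucikEnergy ι a b u := by
  rw [fucikEnergy, fucikEnergy, map_smul, fucikForm_smul a b hc, norm_smul, Real.norm_of_nonneg hc]
  ring

theorem IsFucikSolution.zero (ι : H →ₗ[ℝ] Lp ℝ 2 μ) (a b : ℝ) : IsFucikSolution ι a b 0 :=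
  fun v => by rw [map_zero, fucikHalfDeriv_zero_left, inner_zero_left]

theorem IsFucikSolution.norm_sq_eq (hu : IsFucikSolution ι a b u) :
    ‖u‖ ^ 2 = fucikForm a b (ι u) := by
  rw [← fucikHalfDeriv_self, ← hu u, real_inner_self_eq_norm_sq]

theorem IsFucikSolution.fucikEnergy_add_le (hu : IsFucikSolution ι a b u) (ha : c ≤ a) (hb : c ≤ b)
    (h : H) : fucikEnergy ι a b (u + h) ≤ (‖h‖ ^ 2 - c * ‖ι h‖ ^ 2) / 2 := by
  have hform := le_fucikForm_add ha hb (ι u) (ι h)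
  rw [fucikEnergy, map_add, norm_add_sq_real, hu h]
  linarith [hu.norm_sq_eq]

theorem IsFucikSolution.le_fucikEnergy_add (hu : IsFucikSolution ι a b u) (ha : a ≤ c) (hb : b ≤ c)
    (h : H) : (‖h‖ ^ 2 - c * ‖ι h‖ ^ 2) / 2 ≤ fucikEnergy ι a b (u + h) := by
  have hform := fucikForm_add_le ha hb (ι u) (ι h)
  rw [fucikEnergy, map_add, norm_add_sq_real, hu h]
  linarith [hu.norm_sq_eq]

theorem fucikEnergy_neg_of_norm_sq_le (ha : c < a) (hb : c < b) (hh : ‖h‖ ^ 2 ≤ c * ‖ι h‖ ^ 2)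
    (h0 : h ≠ 0) : fucikEnergy ι a b h < 0 := by
  have henergy := (IsFucikSolution.zero ι a b).fucikEnergy_add_le (min_le_left a b)
    (min_le_right a b) h
  rw [zero_add] at henergy
  have hsq : 0 < ‖ι h‖ ^ 2 := by
    refine (sq_nonneg _).lt_of_ne fun hzero => ?_
    rw [← hzero, mul_zero] at hh
    exact hh.not_gt (pow_pos (norm_pos_iff.2 h0) 2)
  linarith [mul_lt_mul_of_pos_right (lt_min ha hb) hsq]

theorem fucikEnergy_pos_of_le_norm_sq (ha : a < c) (hb : b < c) (hh : c * ‖ι h‖ ^ 2 ≤ ‖h‖ ^ 2)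
    (h0 : h ≠ 0) : 0 < fucikEnergy ι a b h := by
  have henergy := (IsFucikSolution.zero ι a b).le_fucikEnergy_add (le_max_left a b)
    (le_max_right a b) h
  rw [zero_add] at henergy
  have hgap : max a b * ‖ι h‖ ^ 2 < ‖h‖ ^ 2 := by
    rcases (sq_nonneg ‖ι h‖).eq_or_lt with hzero | hsq
    · rw [← hzero, mul_zero]
      exact pow_pos (norm_pos_iff.2 h0) 2
    · exact (mul_lt_mul_of_pos_right (max_lt ha hb) hsq).trans_le hh
  linarith

end FucikEnergy

theorem region_II_spectrum_free_of_simple_eigenvalue_general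
    {Ω : Type*} [MeasurableSpace Ω] {μ : Measure Ω}
    {H : Type*} [NormedAddCommGroup H] [InnerProductSpace ℝ H]
    {ι : H →ₗ[ℝ] Lp ℝ 2 μ} {lam₀ lam₂ : ℝ} {N E M : Submodule ℝ H} (hsup : N ⊔ E ⊔ M = ⊤)
    (hN : ∀ v ∈ N, ‖v‖ ^ 2 ≤ lam₀ * ‖ι v‖ ^ 2) (hM : ∀ w ∈ M, lam₂ * ‖ι w‖ ^ 2 ≤ ‖w‖ ^ 2)
    (hE : Module.finrank ℝ E = 1) {a b : ℝ} (ha : a ∈ Set.Ioo lam₀ lam₂)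
    (hb : b ∈ Set.Ioo lam₀ lam₂) (hν : minimalCurve ι N (E ⊔ M) lam₀ lam₂ a < b)
    (hμ : b < maximalCurve ι (N ⊔ E) M lam₀ lam₂ a) : (a, b) ∉ fucikSpectrum ι := by
  rintro ⟨u, hu0, hu⟩
  refine hu0 (eq_zero_of_saddle_of_hasNegSlice (N := N) (M := M) (J := fucikEnergy ι a b)
    (fun c hc => fucikEnergy_smul a b hc.le)
    (fun v hv => fucikEnergy_neg_of_norm_sq_le ha.1 hb.1 (hN v hv))
    (fun w hw => fucikEnergy_pos_of_le_norm_sq ha.2 hb.2 (hM w hw)) hE (hsup ▸ Submodule.mem_top)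
    (fun v hv => ?_) (fun w hw => ?_)
    (exists_hasNegSlice_of_infSup_neg (infSup_fucikEnergy_neg_of_minimalCurve_lt hb hν))
    (exists_hasNegSlice_of_supInf_pos (supInf_fucikEnergy_pos_of_lt_maximalCurve hb hμ)))
  · linarith [hu.fucikEnergy_add_le ha.1.le hb.1.le v, hN v hv]
  · linarith [hu.le_fucikEnergy_add ha.2.le hb.2.le w, hM w hw]

theorem region_II_spectrum_free_of_simple_eigenvalue
    {Ω : Type*} [MeasurableSpace Ω] (μ : Measure Ω)
    {H : Type*} [NormedAddCommGroup H] [InnerProductSpace ℝ H] [CompleteSpace H]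
    (ι : H →ₗ[ℝ] Lp ℝ 2 μ) (hι : Function.Injective ι)
    (C : ℝ) (hC : 0 < C) (hιC : ∀ u : H, ‖ι u‖ ≤ C * ‖u‖)
    (I : H → ℝ → ℝ → ℝ)
    (hI : ∀ u a b, I u a b = ‖u‖ ^ 2 / 2 -
      (∫ x, (b * (Lp.posPart (ι u)) x ^ 2 + a * (Lp.negPart (ι u)) x ^ 2) ∂μ) / 2)
    (lam₀ lam₁ lam₂ : ℝ) (hlam₀ : 0 < lam₀) (hlam₀₁ : lam₀ < lam₁) (hlam₁₂ : lam₁ < lam₂)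
    (N E M : Submodule ℝ H)
    (hNcl : IsClosed (N : Set H)) (hEcl : IsClosed (E : Set H)) (hMcl : IsClosed (M : Set H))
    (hNfd : FiniteDimensional ℝ N) (hEfd : FiniteDimensional ℝ E) (hEne : E ≠ ⊥)
    (horthNE : ∀ v ∈ N, ∀ y ∈ E, ⟪v, y⟫ = 0)
    (horthNM : ∀ v ∈ N, ∀ w ∈ M, ⟪v, w⟫ = 0)
    (horthEM : ∀ y ∈ E, ∀ w ∈ M, ⟪y, w⟫ = 0)
    (horthNE2 : ∀ v ∈ N, ∀ y ∈ E, ∫ x, (ι v) x * (ι y) x ∂μ = 0)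
    (horthNM2 : ∀ v ∈ N, ∀ w ∈ M, ∫ x, (ι v) x * (ι w) x ∂μ = 0)
    (horthEM2 : ∀ y ∈ E, ∀ w ∈ M, ∫ x, (ι y) x * (ι w) x ∂μ = 0)
    (hdirect : N ⊔ E ⊔ M = ⊤)
    (hNspec : ∀ v ∈ N, ‖v‖ ^ 2 ≤ lam₀ * ‖ι v‖ ^ 2)
    (hEspec : ∀ y ∈ E, ∀ u : H, ⟪y, u⟫ = lam₁ * ∫ x, (ι y) x * (ι u) x ∂μ)
    (hMspec : ∀ w ∈ M, lam₂ * ‖ι w‖ ^ 2 ≤ ‖w‖ ^ 2)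
    (hcompact : ∀ s : Set H, Bornology.IsBounded s →
      IsCompact (closure ((fun u => ι u) '' s)))
    (Sig : Set (ℝ × ℝ))
    (hSig : Sig = {q : ℝ × ℝ | ∃ u : H, u ≠ 0 ∧ ∀ v : H,
      ⟪u, v⟫ = ∫ x, (q.2 * (Lp.posPart (ι u)) x - q.1 * (Lp.negPart (ι u)) x) * (ι v) x ∂μ})
    (n m : ℝ → ℝ → ℝ)
    (hn : ∀ a b, n a b = sInf {t : ℝ | ∃ w ∈ E ⊔ M, ‖w‖ = 1 ∧
      t = sSup {r : ℝ | ∃ v ∈ N, r = I (v + w) a b}})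
    (hm : ∀ a b, m a b = sSup {t : ℝ | ∃ v ∈ N ⊔ E, ‖v‖ = 1 ∧
      t = sInf {r : ℝ | ∃ w ∈ M, r = I (v + w) a b}})
    (ν μf : ℝ → ℝ)
    (hν : ∀ a, ν a = sSup {b ∈ Set.Ioo lam₀ lam₂ | 0 ≤ n a b})
    (hμf : ∀ a, μf a = sInf {b ∈ Set.Ioo lam₀ lam₂ | m a b ≤ 0})
    (hsimple : Module.finrank ℝ E = 1) :
    ∀ a b, a ∈ Set.Ioo lam₀ lam₂ → b ∈ Set.Ioo lam₀ lam₂ →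
      ν a < b → b < μf a → (a, b) ∉ Sig := by
  simp only [hSig, hν, hμf, hn, hm, hI]
  exact fun a b =>
    region_II_spectrum_free_of_simple_eigenvalue_general hdirect hNspec hMspec hsimple
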